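/- Let (p_t, q_t) be a trajectory on [0,T] of the single-particle system (q̇_t = p_t, ṗ_t = −∇Φ(q_t) − ∇_qΨ(t, q_t)). Let L* > 0 with q* ∈ ℝ^d, |q*| = L*, satisfying u(s) < u(L*) for all s > L*, let a* ≥ B + sup_{|q| ≤ L*}|∇Φ(q)|, and let η > 0. Suppose |p_0|² + |q_0|² ≤ (L*)², and let 0 ≤ t_1 < t_2 ≤ T. If |p_{t_2}| ≤ L* + (a* + η)t_2 and |q_{t_2}| ≤ L*, then |q_t| ≤ L* for all t ∈ [0, t_2], and consequently |p_{t_1}| ≤ L* + (a* + η)t_1 and |q_{t_1}| ≤ L*. -/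

import Mathlib

/-!
Along a trajectory put `r = |q|` and `v = r' = ⟨p, q⟩ / |q|` wherever `q ≠ 0`. Almost everywhere

  `v' = (|p|² - v²) / r - ⟨∇Φ(q) + ∇Ψ(t, q), q / r⟩ ≥ -u'(r)`,

by Cauchy-Schwarz, `|∇Ψ| < B` and the lower bound on `u'`. Hence the energy `v² / 2 + u(r)` does
not increase while the particle moves inward. Suppose that `r` exceeds `L*` on an excursion and
then comes back to `L*`. By Rolle's theorem there is a turning point (`v = 0`) beyond `L*`; from
the last such point `z` until the return, the motion is inward, so
`u(L*) ≤ v² / 2 + u(L*) ≤ u(r(z)) < u(L*)`, a contradiction (`no_return`, `no_excursion`).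

The delicate case is a return with zero velocity, where turning points might accumulate at the
return time. It is excluded in `velocity_nonpos_near_return`: as `u` is `C²` and `u'(L*) ≤ 0`, one
has `u'(r) ≤ C (r - L*)`, and a comparison with the linear oscillator shows that `v ≤ 0` on a
whole interval before the return.

Since `r ≤ L*` at both times `0` and `t₂`, there is no excursion in `[0, t₂]`; the force is then
bounded by `a*`, and so `|p_t| ≤ L* + a* t`.

The momentum is only absolutely continuous, so monotonicity is deduced from a.e. derivative bounds
through the fundamental theorem of calculus for absolutely continuous functions.
-/

open MeasureTheory Set Filter Topology
open scoped RealInnerProductSpace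

noncomputable section

/-- `d`-dimensional Euclidean space. -/
abbrev Euc (d : ℕ) := EuclideanSpace ℝ (Fin d)

/-- A trajectory on `[0,T]` of the single-particle system `q̇_t = p_t`,
`ṗ_t = −∇Φ(q_t) − ∇_qΨ(t, q_t)`: `q` is of class `C¹` with derivative `p`, and `p` is
locally absolutely continuous with the stated a.e. derivative (integral form). -/
structure IsTrajectory {d : ℕ} (T : ℝ) (Φ : Euc d → ℝ) (Ψ : ℝ → Euc d → ℝ)
    (p q : ℝ → Euc d) : Prop where
  hq : ∀ t ∈ Icc (0:ℝ) T, HasDerivWithinAt q (p t) (Icc (0:ℝ) T) t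
  contp : ContinuousOn p (Icc (0:ℝ) T)
  intF : IntervalIntegrable (fun s => -gradient Φ (q s) - gradient (Ψ s) (q s)) volume 0 T
  hp : ∀ t ∈ Icc (0:ℝ) T,
    p t = p 0 + ∫ s in (0:ℝ)..t, (-gradient Φ (q s) - gradient (Ψ s) (q s))

/-- The auxiliary Hamiltonian `H̃(p,q) = ½⟨p, q/|q|⟩² + u(|q|)`. -/
def Htilde {d : ℕ} (u : ℝ → ℝ) (p q : Euc d) : ℝ :=
  (1 / 2) * ⟪p, ‖q‖⁻¹ • q⟫ ^ 2 + u ‖q‖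

/-! ### Absolutely continuous functions, hitting times and one-sided derivatives -/

/-- An absolutely continuous function with a.e. nonnegative derivative does not decrease. -/
lemma le_of_ac_of_deriv_nonneg {f : ℝ → ℝ} {a b : ℝ} (hab : a ≤ b)
    (hf : AbsolutelyContinuousOnInterval f a b)
    (h : ∀ᵐ x, x ∈ Ioo a b → ∃ w, HasDerivAt f w x ∧ 0 ≤ w) : f a ≤ f b := by
  have h1 := hf.integral_deriv_eq_sub
  have h2 : 0 ≤ ∫ x in a..b, deriv f x := by
    rw [intervalIntegral.integral_of_le hab, integral_Ioc_eq_integral_Ioo]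
    refine setIntegral_nonneg_of_ae_restrict ?_
    rw [EventuallyLE, ae_restrict_iff' measurableSet_Ioo]
    filter_upwards [h] with x hx hxm
    obtain ⟨w, hw, hw0⟩ := hx hxm
    simpa [hw.deriv] using hw0
  linarith

lemma ac_of_hasDerivWithinAt {f f' : ℝ → ℝ} {a b : ℝ} (hab : a ≤ b)
    (hf : ∀ t ∈ Icc a b, HasDerivWithinAt f (f' t) (Icc a b) t)
    (hf' : ContinuousOn f' (Icc a b)) : AbsolutelyContinuousOnInterval f a b := by
  obtain ⟨C, hC⟩ := isCompact_Icc.exists_bound_of_continuousOn hf'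
  have : LipschitzOnWith C.toNNReal f (uIcc a b) := by
    rw [uIcc_of_le hab]
    refine (convex_Icc a b).lipschitzOnWith_of_nnnorm_hasDerivWithin_le hf fun x hx => ?_
    rw [← NNReal.coe_le_coe, coe_nnnorm]
    exact (hC x hx).trans (Real.le_coe_toNNReal C)
  exact this.absolutelyContinuousOnInterval

lemma ac_congr {f g : ℝ → ℝ} {a b : ℝ} (hf : AbsolutelyContinuousOnInterval f a b)
    (h : ∀ t ∈ uIcc a b, g t = f t) : AbsolutelyContinuousOnInterval g a b := by
  rw [absolutelyContinuousOnInterval_iff] at hf ⊢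
  intro ε hε
  obtain ⟨δ, hδ, H⟩ := hf ε hε
  refine ⟨δ, hδ, fun E hE hlen => ?_⟩
  convert H E hE hlen using 1
  refine Finset.sum_congr rfl fun i hi => ?_
  have hi' := hE.1 i hi
  rw [h _ hi'.1, h _ hi'.2]

lemma ac_sum {ι : Type*} (s : Finset ι) {f : ι → ℝ → ℝ} {a b : ℝ}
    (hf : ∀ i ∈ s, AbsolutelyContinuousOnInterval (f i) a b) :
    AbsolutelyContinuousOnInterval (fun t => ∑ i ∈ s, f i t) a b := by
  classical
  induction s using Finset.induction_on with
  | empty =>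
    simpa using (LipschitzOnWith.absolutelyContinuousOnInterval
      ((LipschitzWith.const (0 : ℝ)).lipschitzOnWith (s := uIcc a b)))
  | insert i s hi ih =>
    simp only [Finset.sum_insert hi]
    exact (hf i (Finset.mem_insert_self i s)).fun_add
      (ih fun j hj => hf j (Finset.mem_insert_of_mem hj))

lemma exists_first_hit {f : ℝ → ℝ} {a b c : ℝ} (hab : a ≤ b) (hf : ContinuousOn f (Icc a b))
    (ha : c < f a) (hb : f b ≤ c) :
    ∃ s ∈ Ioc a b, f s = c ∧ ∀ t ∈ Ico a s, c < f t := by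
  have hS : IsCompact (Icc a b ∩ f ⁻¹' {c}) :=
    isCompact_Icc.of_isClosed_subset
      (hf.preimage_isClosed_of_isClosed isClosed_Icc isClosed_singleton) inter_subset_left
  have hne : (Icc a b ∩ f ⁻¹' {c}).Nonempty := by
    obtain ⟨x, hx, hxc⟩ := intermediate_value_Icc' hab hf ⟨hb, ha.le⟩
    exact ⟨x, hx, hxc⟩
  obtain ⟨s, ⟨hs, hsc⟩, hmin⟩ := hS.exists_isLeast hne
  have hsc' : f s = c := hsc
  have has : a ≠ s := by rintro rfl; linarith
  refine ⟨s, ⟨lt_of_le_of_ne hs.1 has, hs.2⟩, hsc', fun t ht => ?_⟩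
  by_contra! hle
  obtain ⟨x, hx, hxc⟩ := intermediate_value_Icc' ht.1
    (hf.mono (Icc_subset_Icc_right (ht.2.le.trans hs.2))) ⟨hle, ha.le⟩
  have := hmin ⟨⟨hx.1, hx.2.trans (ht.2.le.trans hs.2)⟩, hxc⟩
  linarith [hx.2, ht.2]

lemma exists_last_hit {f : ℝ → ℝ} {a b c : ℝ} (hab : a ≤ b) (hf : ContinuousOn f (Icc a b))
    (ha : f a ≤ c) (hb : c < f b) :
    ∃ s ∈ Ico a b, f s = c ∧ ∀ t ∈ Ioc s b, c < f t := by
  obtain ⟨s, hs, hsc, h⟩ := exists_first_hit (f := fun t => f (-t)) (a := -b) (b := -a) (c := c)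
    (by linarith) (hf.comp continuousOn_neg fun x hx => ⟨by linarith [hx.2], by linarith [hx.1]⟩)
    (by simpa using hb) (by simpa using ha)
  refine ⟨-s, ⟨by linarith [hs.2], by linarith [hs.1]⟩, hsc, fun t ht => ?_⟩
  simpa using h (-t) ⟨by linarith [ht.2], by linarith [ht.1]⟩

lemma nonpos_of_hasDeriv_left {f : ℝ → ℝ} {f' a b : ℝ} (hab : a < b)
    (hf : HasDerivWithinAt f f' (Icc a b) b) (hmin : ∀ t ∈ Ico a b, f b ≤ f t) : f' ≤ 0 := by
  have h : HasDerivWithinAt f f' (Iio b) b :=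
    hf.mono_of_mem_nhdsWithin (mem_of_superset (Ico_mem_nhdsLT hab) Ico_subset_Icc_self)
  rw [hasDerivWithinAt_iff_tendsto_slope' self_notMem_Iio] at h
  refine le_of_tendsto h ?_
  filter_upwards [Ico_mem_nhdsLT hab] with t ht
  rw [slope_def_field]
  exact div_nonpos_of_nonneg_of_nonpos (by linarith [hmin t ht]) (by linarith [ht.2])

lemma nonpos_of_hasDeriv_right {f : ℝ → ℝ} {f' a : ℝ}
    (hf : HasDerivAt f f' a) (hmax : ∀ t, a < t → f t ≤ f a) : f' ≤ 0 := by
  have h : HasDerivWithinAt f f' (Ioi a) a := hf.hasDerivWithinAt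
  rw [hasDerivWithinAt_iff_tendsto_slope' self_notMem_Ioi] at h
  refine le_of_tendsto h ?_
  filter_upwards [self_mem_nhdsWithin] with t (ht : a < t)
  rw [slope_def_field]
  exact div_nonpos_of_nonpos_of_nonneg (by linarith [hmax t ht]) (by linarith)

/-! ### The radial equation in one dimension -/

/-- Shortly before a return time `b` to the level `L`, the radial velocity is nonpositive. This is
a Sturm-type comparison with the equation `y'' = -C y`: weighting `y = r - L ≥ 0` and its derivative
by `φ τ = 1 - C (τ - t)² / 2` gives a quantity `v φ - y φ'` that is nondecreasing on `[t, b]`, equal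
to `v t` at `τ = t` and nonpositive at `τ = b`. -/
lemma velocity_nonpos_near_return {L C a b : ℝ} {r v : ℝ → ℝ} (hC : 0 ≤ C)
    (hr : ∀ t ∈ Icc a b, HasDerivWithinAt r (v t) (Icc a b) t)
    (hv : AbsolutelyContinuousOnInterval v a b)
    (hode : ∀ᵐ t, t ∈ Ioo a b → ∃ w, HasDerivAt v w t ∧ -(C * (r t - L)) ≤ w)
    (hrL : ∀ t ∈ Icc a b, L ≤ r t) (hb : r b = L) (hvb : v b ≤ 0)
    {t : ℝ} (ht : t ∈ Icc a b) (hsmall : C * (b - t) ^ 2 ≤ 2) : v t ≤ 0 := by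
  have hab : a ≤ b := ht.1.trans ht.2
  have hsub : uIcc t b ⊆ uIcc a b := by
    rw [uIcc_of_le ht.2, uIcc_of_le hab]; exact Icc_subset_Icc_left ht.1
  have hvc : ContinuousOn v (Icc a b) := by
    have := hv.continuousOn; rwa [uIcc_of_le hab] at this
  have hrac : AbsolutelyContinuousOnInterval r a b := ac_of_hasDerivWithinAt hab hr hvc
  have hφ : AbsolutelyContinuousOnInterval (fun τ : ℝ => 1 - C * (τ - t) ^ 2 / 2) t b :=
    ContDiffOn.absolutelyContinuousOnInterval (by fun_prop)
  have hψ : AbsolutelyContinuousOnInterval (fun τ : ℝ => C * (τ - t)) t b :=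
    ContDiffOn.absolutelyContinuousOnInterval (by fun_prop)
  have hcst : AbsolutelyContinuousOnInterval (fun _ : ℝ => L) t b :=
    ContDiffOn.absolutelyContinuousOnInterval (by fun_prop)
  have hac := ((hv.mono hsub).fun_mul hφ).fun_add (((hrac.mono hsub).fun_sub hcst).fun_mul hψ)
  have key := le_of_ac_of_deriv_nonneg ht.2 hac (by
    filter_upwards [hode] with τ hτ hτm
    have hτab : τ ∈ Ioo a b := ⟨ht.1.trans_lt hτm.1, hτm.2⟩
    obtain ⟨w, hw, hwC⟩ := hτ hτab
    have hrτ : HasDerivAt r (v τ) τ :=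
      (hr τ (Ioo_subset_Icc_self hτab)).hasDerivAt (Icc_mem_nhds hτab.1 hτab.2)
    have h1 : HasDerivAt (fun τ : ℝ => 1 - C * (τ - t) ^ 2 / 2) (-(C * (τ - t))) τ := by
      have := ((((hasDerivAt_id τ).sub_const t).pow 2).const_mul C).div_const 2 |>.const_sub 1
      convert! this using 1
      simp; ring
    have h2 : HasDerivAt (fun τ : ℝ => C * (τ - t)) C τ := by
      simpa using ((hasDerivAt_id τ).sub_const t).const_mul C
    refine ⟨_, (hw.fun_mul h1).fun_add ((hrτ.sub_const L).fun_mul h2), ?_⟩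
    have hy := hrL τ (Ioo_subset_Icc_self hτab)
    have hsq : C * (τ - t) ^ 2 ≤ 2 := by
      refine le_trans ?_ hsmall
      have h3 : 0 ≤ τ - t := by linarith [hτm.1]
      have h4 : τ - t ≤ b - t := by linarith [hτm.2]
      gcongr
    have hsq0 : 0 ≤ C * (τ - t) ^ 2 := by positivity
    have h5 : 0 ≤ (w + C * (r τ - L)) * (1 - C * (τ - t) ^ 2 / 2) :=
      mul_nonneg (by linarith) (by linarith)
    have h6 : 0 ≤ C * (r τ - L) * (C * (τ - t) ^ 2 / 2) :=
      mul_nonneg (mul_nonneg hC (by linarith)) (by linarith)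
    nlinarith)
  simp only [sub_self, hb, zero_mul, add_zero, mul_zero] at key
  have : v b * (1 - C * (b - t) ^ 2 / 2) ≤ 0 :=
    mul_nonpos_of_nonpos_of_nonneg hvb (by linarith)
  norm_num at key
  linarith

/-- The one-dimensional no-return principle: under `r'' ≥ -u'(r)`, the radius cannot come to
level `L` from a turning point beyond it. On the last inward leg the energy `v² / 2 + u (r)` does
not increase, so the leg would start at a turning point with `u (r) ≥ u L`. -/
lemma no_return {u : ℝ → ℝ} (hu : ContDiff ℝ 2 u) {L a b : ℝ} (hab : a < b)
    (hring : ∀ s : ℝ, L < s → u s < u L) {r v : ℝ → ℝ}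
    (hr : ∀ t ∈ Icc a b, HasDerivWithinAt r (v t) (Icc a b) t)
    (hv : AbsolutelyContinuousOnInterval v a b)
    (hode : ∀ᵐ t, t ∈ Ioo a b → ∃ w, HasDerivAt v w t ∧ -deriv u (r t) ≤ w)
    (hrL : ∀ t ∈ Ico a b, L < r t) (hb : r b = L) (hva : v a = 0) : False := by
  have hrL' : ∀ t ∈ Icc a b, L ≤ r t := fun t ht => by
    rcases ht.2.lt_or_eq with h | rfl
    · exact (hrL t ⟨ht.1, h⟩).le
    · exact hb.ge
  have hvc : ContinuousOn v (Icc a b) := by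
    have := hv.continuousOn; rwa [uIcc_of_le hab.le] at this
  have hrc : ContinuousOn r (Icc a b) := fun t ht => (hr t ht).continuousWithinAt
  have hvb : v b ≤ 0 := nonpos_of_hasDeriv_left hab (hr b (right_mem_Icc.2 hab.le))
    fun t ht => by rw [hb]; exact (hrL t ht).le
  have hud : Differentiable ℝ u := hu.differentiable (by norm_num)
  have hu1 : ContDiff ℝ 1 (deriv u) := hu.deriv'
  have huL : deriv u L ≤ 0 := nonpos_of_hasDeriv_right (hud L).hasDerivAt fun t ht => (hring t ht).le
  -- Since `u'` is `C¹` and `u' L ≤ 0`, one has `u' ≤ C (· - L)` on the range of `r`.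
  obtain ⟨R, hR⟩ := isCompact_Icc.exists_bound_of_continuousOn hrc
  obtain ⟨K, hK⟩ := hu1.contDiffOn.exists_lipschitzOnWith (by norm_num) (convex_Icc L R)
    isCompact_Icc
  have hbd : ∀ t ∈ Icc a b, deriv u (r t) ≤ K * (r t - L) := fun t ht => by
    have h1 : r t ∈ Icc L R := ⟨hrL' t ht, (le_abs_self _).trans (hR t ht)⟩
    have := hK.dist_le_mul (r t) h1 L ⟨le_rfl, h1.1.trans h1.2⟩
    rw [Real.dist_eq, Real.dist_eq, abs_of_nonneg (by linarith [h1.1] : 0 ≤ r t - L)] at this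
    linarith [le_abs_self (deriv u (r t) - deriv u L)]
  -- A time `b' < b` after which the velocity is nonpositive.
  obtain ⟨b', hb', hneg⟩ : ∃ b' ∈ Ico a b, ∀ t ∈ Icc b' b, v t ≤ 0 := by
    have hlim : Tendsto (fun t : ℝ => (K : ℝ) * (b - t) ^ 2) (𝓝[<] b) (𝓝 0) := by
      have : Continuous fun t : ℝ => (K : ℝ) * (b - t) ^ 2 := by fun_prop
      simpa using (this.tendsto b).mono_left nhdsWithin_le_nhds
    obtain ⟨b', h1, h2⟩ := ((hlim.eventually (eventually_le_nhds two_pos)).and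
      (Ico_mem_nhdsLT hab)).exists
    refine ⟨b', h2, fun t ht => ?_⟩
    refine velocity_nonpos_near_return K.coe_nonneg hr hv ?_ hrL' hb hvb ⟨h2.1.trans ht.1, ht.2⟩ ?_
    · filter_upwards [hode] with τ hτ hτm
      obtain ⟨w, hw, hwu⟩ := hτ hτm
      exact ⟨w, hw, by linarith [hbd τ (Ioo_subset_Icc_self hτm)]⟩
    · refine le_trans ?_ h1
      have h3 : 0 ≤ b - t := by linarith [ht.2]
      have h4 : b - t ≤ b - b' := by linarith [ht.1]
      have := K.coe_nonneg
      gcongr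
  -- The last turning point `z` before the return.
  obtain ⟨z, hz, hvz, hzneg⟩ : ∃ z ∈ Ico a b, v z = 0 ∧ ∀ t ∈ Icc z b, v t ≤ 0 := by
    rcases (hneg b' ⟨le_rfl, hb'.2.le⟩).lt_or_eq with h | h
    · obtain ⟨z, hz, hvz, hlast⟩ := exists_last_hit (f := fun t => -v t) (c := 0) hb'.1
        (hvc.neg.mono (Icc_subset_Icc_right hb'.2.le)) (by simp [hva]) (by simpa using h)
      have hvz0 : v z = 0 := by simpa using hvz
      refine ⟨z, ⟨hz.1, hz.2.trans hb'.2⟩, hvz0, fun t ht => ?_⟩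
      rcases le_total b' t with h' | h'
      · exact hneg t ⟨h', ht.2⟩
      · rcases ht.1.eq_or_lt with rfl | h''
        · exact hvz0.le
        · linarith [hlast t ⟨h'', h'⟩]
    · exact ⟨b', hb', h, hneg⟩
  have hsubI : Icc z b ⊆ Icc a b := Icc_subset_Icc_left hz.1
  have hsub : uIcc z b ⊆ uIcc a b := by
    rwa [uIcc_of_le hz.2.le, uIcc_of_le hab.le]
  have hur : AbsolutelyContinuousOnInterval (fun t => u (r t)) a b :=
    ac_of_hasDerivWithinAt (f' := fun t => deriv u (r t) * v t) hab.le
      (fun t ht => (hud (r t)).hasDerivAt.comp_hasDerivWithinAt t (hr t ht))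
      ((hu1.continuous.comp_continuousOn hrc).mul hvc)
  have hac := ((((hv.fun_mul hv).const_mul (1 / 2)).fun_add hur).fun_neg).mono hsub
  have key := le_of_ac_of_deriv_nonneg hz.2.le hac (by
    filter_upwards [hode] with τ hτ hτm
    have hτab : τ ∈ Ioo a b := ⟨hz.1.trans_lt hτm.1, hτm.2⟩
    obtain ⟨w, hw, hwu⟩ := hτ hτab
    have hrτ : HasDerivAt r (v τ) τ :=
      (hr τ (Ioo_subset_Icc_self hτab)).hasDerivAt (Icc_mem_nhds hτab.1 hτab.2)
    refine ⟨_, (((hw.fun_mul hw).const_mul (1 / 2)).fun_add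
      ((hud (r τ)).hasDerivAt.comp τ hrτ)).fun_neg, ?_⟩
    have h1 := hzneg τ (Ioo_subset_Icc_self hτm)
    nlinarith)
  have h1 := hring (r z) (hrL z hz)
  simp only [hvz, hb] at key
  nlinarith [mul_self_nonneg (v b)]

/-! ### Trajectories -/

/-- The momentum is the integral of the force, so its pairing with the position is absolutely
continuous. -/
lemma IsTrajectory.ac_inner {d : ℕ} {T : ℝ} (hT : 0 < T) {Φ : Euc d → ℝ}
    {Ψ : ℝ → Euc d → ℝ} {p q : ℝ → Euc d} (h : IsTrajectory T Φ Ψ p q) :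
    AbsolutelyContinuousOnInterval (fun t => ⟪p t, q t⟫) 0 T := by
  have hp : ∀ i, AbsolutelyContinuousOnInterval (fun t => p t i) 0 T := fun i => by
    have hint := h.intF
    set F : ℝ → Euc d := fun s => -gradient Φ (q s) - gradient (Ψ s) (q s) with hF
    let e : Euc d →L[ℝ] ℝ := EuclideanSpace.proj i
    have hFi : IntervalIntegrable (fun s => e (F s)) volume 0 T :=
      ⟨e.integrable_comp hint.1, e.integrable_comp hint.2⟩
    have h1 := (hFi.absolutelyContinuousOnInterval_intervalIntegral (c := 0) left_mem_uIcc).fun_add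
      (ContDiffOn.absolutelyContinuousOnInterval (f := fun _ : ℝ => p 0 i) (by fun_prop))
    refine ac_congr h1 fun t ht => ?_
    rw [uIcc_of_le hT.le] at ht
    have hsub : IntervalIntegrable F volume 0 t :=
      hint.mono_set (by
        rw [uIcc_of_le hT.le, uIcc_of_le ht.1]; exact Icc_subset_Icc_right ht.2)
    have h2 := congrArg e (h.hp t ht)
    rw [map_add, ← e.intervalIntegral_comp_comm hsub] at h2
    change e (p t) = _
    rw [h2, add_comm]
    rfl
  have hq : ∀ i, AbsolutelyContinuousOnInterval (fun t => q t i) 0 T := fun i => by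
    let e : Euc d →L[ℝ] ℝ := EuclideanSpace.proj i
    exact ac_of_hasDerivWithinAt (f' := fun t => e (p t)) hT.le
      (fun t ht => e.hasFDerivAt.comp_hasDerivWithinAt t (h.hq t ht))
      (e.continuous.comp_continuousOn h.contp)
  have := ac_sum Finset.univ fun i _ => (hp i).fun_mul (hq i)
  convert this using 2 with t
  rw [PiLp.inner_apply]
  refine Finset.sum_congr rfl fun i _ => ?_
  simp [mul_comm]

/-- Almost every time, the momentum is differentiable with derivative the force. -/
lemma IsTrajectory.ae_hasDerivAt_momentum {d : ℕ} {T : ℝ} (hT : 0 < T) {Φ : Euc d → ℝ}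
    {Ψ : ℝ → Euc d → ℝ} {p q : ℝ → Euc d} (h : IsTrajectory T Φ Ψ p q) :
    ∀ᵐ t, t ∈ Ioo 0 T → HasDerivAt p (-gradient Φ (q t) - gradient (Ψ t) (q t)) t := by
  filter_upwards [h.intF.ae_hasDerivAt_integral] with t ht htm
  have ht' : t ∈ uIcc 0 T := by rw [uIcc_of_le hT.le]; exact Ioo_subset_Icc_self htm
  refine ((ht ht' 0 left_mem_uIcc).const_add (p 0)).congr_of_eventuallyEq ?_
  filter_upwards [Icc_mem_nhds htm.1 htm.2] with s hs using h.hp s hs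

lemma hasDerivWithinAt_norm_of_ne_zero {d : ℕ} {q : ℝ → Euc d} {q' : Euc d} {s : Set ℝ} {t : ℝ}
    (hq : HasDerivWithinAt q q' s t) (h0 : q t ≠ 0) :
    HasDerivWithinAt (fun t => ‖q t‖) (⟪q', q t⟫ * ‖q t‖⁻¹) s t := by
  have h1 := hq.norm_sq.sqrt (by positivity)
  have h2 : (fun t => √(‖q t‖ ^ 2)) = fun t => ‖q t‖ := by
    funext t; exact Real.sqrt_sq (norm_nonneg _)
  rw [h2] at h1
  convert h1 using 1
  rw [Real.sqrt_sq (norm_nonneg _), real_inner_comm]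
  have := norm_pos_iff.2 h0
  field_simp

/-- The radius cannot make an excursion above `L`: between an exit and a return Rolle's theorem
provides a turning point beyond `L`, and the radial equation
`r'' = (|p|² - r'²) / r + ⟨force, q / r⟩ ≥ -u'(r)` puts `no_return` in force. -/
lemma no_excursion {d : ℕ} {T B : ℝ} (hT : 0 < T)
    {Φ : Euc d → ℝ} {Ψ : ℝ → Euc d → ℝ}
    (hΨB : ∀ t ∈ Icc (0:ℝ) T, ∀ x : Euc d, ‖gradient (Ψ t) x‖ < B)
    {u : ℝ → ℝ} (hu : ContDiff ℝ 2 u)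
    (hu' : ∀ r : ℝ, 0 < r → ∀ x : Euc d, ‖x‖ = r →
      B + ⟪gradient Φ x, ‖x‖⁻¹ • x⟫ ≤ deriv u r)
    {p q : ℝ → Euc d} (htraj : IsTrajectory T Φ Ψ p q) {L : ℝ} (hL : 0 < L)
    (hring : ∀ s : ℝ, L < s → u s < u L) {s₀ s₁ : ℝ} (hs₀ : 0 ≤ s₀) (hs : s₀ < s₁) (hs₁ : s₁ ≤ T)
    (h0 : ‖q s₀‖ = L) (h1 : ‖q s₁‖ = L) (hbet : ∀ t ∈ Ioo s₀ s₁, L < ‖q t‖) : False := by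
  set r : ℝ → ℝ := fun t => ‖q t‖ with hr
  set v : ℝ → ℝ := fun t => ⟪p t, q t⟫ * ‖q t‖⁻¹ with hv
  have hsubI : Icc s₀ s₁ ⊆ Icc 0 T := Icc_subset_Icc hs₀ hs₁
  have hrpos : ∀ t ∈ Icc s₀ s₁, 0 < ‖q t‖ := fun t ht => by
    rcases ht.1.eq_or_lt with rfl | h
    · rw [h0]; exact hL
    rcases ht.2.eq_or_lt with rfl | h'
    · rw [h1]; exact hL
    exact hL.trans (hbet t ⟨h, h'⟩)
  have hrd : ∀ t ∈ Icc s₀ s₁, HasDerivWithinAt r (v t) (Icc s₀ s₁) t := fun t ht =>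
    hasDerivWithinAt_norm_of_ne_zero ((htraj.hq t (hsubI ht)).mono hsubI)
      (norm_pos_iff.1 (hrpos t ht))
  have hqc : ContinuousOn q (Icc s₀ s₁) := fun t ht =>
    ((htraj.hq t (hsubI ht)).mono hsubI).continuousWithinAt
  have hvc : ContinuousOn v (Icc s₀ s₁) :=
    ((htraj.contp.mono hsubI).inner hqc).mul (hqc.norm.inv₀ fun t ht => (hrpos t ht).ne')
  have hvac : AbsolutelyContinuousOnInterval v s₀ s₁ := by
    refine ((htraj.ac_inner hT).mono ?_).fun_mul ?_
    · rwa [uIcc_of_le hs.le, uIcc_of_le hT.le]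
    · exact ac_of_hasDerivWithinAt hs.le (fun t ht => (hrd t ht).fun_inv (hrpos t ht).ne')
        (hvc.neg.div (hqc.norm.pow 2) fun t ht => pow_ne_zero 2 (hrpos t ht).ne')
  have hode : ∀ᵐ t, t ∈ Ioo s₀ s₁ → ∃ w, HasDerivAt v w t ∧ -deriv u (r t) ≤ w := by
    filter_upwards [htraj.ae_hasDerivAt_momentum hT] with t ht htm
    have htI := Ioo_subset_Icc_self htm
    have hpt := ht ⟨hs₀.trans_lt htm.1, htm.2.trans_le hs₁⟩
    have hnhds : Icc s₀ s₁ ∈ 𝓝 t := Icc_mem_nhds htm.1 htm.2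
    have hqt : HasDerivAt q (p t) t := ((htraj.hq t (hsubI htI)).mono hsubI).hasDerivAt hnhds
    have hrt : HasDerivAt r (v t) t := (hrd t htI).hasDerivAt hnhds
    have hpos := hrpos t htI
    refine ⟨_, (hpt.inner ℝ hqt).fun_mul (hrt.fun_inv hpos.ne'), ?_⟩
    have hubd := hu' (r t) hpos (q t) rfl
    have hΨ := hΨB t (hsubI htI) (q t)
    have hcsΨ := real_inner_le_norm (gradient (Ψ t) (q t)) (q t)
    have hcsp := real_inner_mul_inner_self_le (p t) (q t)
    rw [real_inner_smul_right] at hubd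
    rw [inner_sub_left, inner_neg_left]
    simp only [hr, hv] at *
    rw [real_inner_self_eq_norm_sq (q t)] at hcsp
    set R := ‖q t‖
    set P := ⟪p t, p t⟫
    set I := ⟪p t, q t⟫
    set G := ⟪gradient Φ (q t), q t⟫
    set S := ⟪gradient (Ψ t) (q t), q t⟫
    have hSB : S * R⁻¹ ≤ B := by
      rw [← div_eq_mul_inv, div_le_iff₀ hpos]
      exact hcsΨ.trans (by gcongr)
    have hcent : 0 ≤ (P * R ^ 2 - I * I) * R⁻¹ ^ 3 :=
      mul_nonneg (by linarith) (by positivity)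
    have hid : (P + (-G - S)) * R⁻¹ + I * (-(I * R⁻¹) / R ^ 2)
        = (P * R ^ 2 - I * I) * R⁻¹ ^ 3 - R⁻¹ * G - S * R⁻¹ := by
      field_simp
      ring
    rw [hid]
    linarith
  have hrc : ContinuousOn r (Icc s₀ s₁) := hqc.norm
  obtain ⟨m, hm, hvm⟩ := exists_hasDerivAt_eq_zero hs hrc (h0.trans h1.symm)
    fun t ht => (hrd t (Ioo_subset_Icc_self ht)).hasDerivAt (Icc_mem_nhds ht.1 ht.2)
  have hsubm : Icc m s₁ ⊆ Icc s₀ s₁ := Icc_subset_Icc_left hm.1.le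
  refine no_return hu hm.2 hring (fun t ht => (hrd t (hsubm ht)).mono hsubm)
    (hvac.mono (by rwa [uIcc_of_le hm.2.le, uIcc_of_le hs.le])) ?_
    (fun t ht => hbet t ⟨hm.1.trans_le ht.1, ht.2⟩) h1 hvm
  filter_upwards [hode] with t ht htm using ht ⟨hm.1.trans htm.1, htm.2⟩

/-- no-return containment: a trajectory starting in the phase-space ball of
radius `L*` which at time `t₂` is in `Ω̄(t₂)` never left `{|q| ≤ L*}` before `t₂`, and in
particular was in `Ω̄(t₁)` at any earlier time `t₁`. -/
theorem stmt17 {d : ℕ} (hd : 0 < d) {T B : ℝ} (hT : 0 < T) (hB : 0 < B)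
    (Φ : Euc d → ℝ) (hΦ : ContDiff ℝ 2 Φ)
    (Ψ : ℝ → Euc d → ℝ) (hΨ : ∀ t, ContDiff ℝ 2 (Ψ t))
    (hΨmeas : ∀ x : Euc d, Measurable fun t => Ψ t x)
    (hΨB : ∀ t ∈ Icc (0:ℝ) T, ∀ x : Euc d, ‖gradient (Ψ t) x‖ < B)
    (u : ℝ → ℝ) (hu : ContDiff ℝ 2 u)
    (hu' : ∀ r : ℝ, 0 < r → ∀ x : Euc d, ‖x‖ = r →
      B + ⟪gradient Φ x, ‖x‖⁻¹ • x⟫ ≤ deriv u r)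
    (p q : ℝ → Euc d) (htraj : IsTrajectory T Φ Ψ p q)
    {Lstar : ℝ} (hLstar : 0 < Lstar)
    (qstar : Euc d) (hqstar : ‖qstar‖ = Lstar)
    (hring : ∀ s : ℝ, Lstar < s → u s < u Lstar)
    {astar : ℝ} (hastar : ∀ x : Euc d, ‖x‖ ≤ Lstar → B + ‖gradient Φ x‖ ≤ astar)
    {η : ℝ} (hη : 0 < η)
    (hstart : ‖p 0‖ ^ 2 + ‖q 0‖ ^ 2 ≤ Lstar ^ 2)
    {t₁ t₂ : ℝ} (ht₁ : 0 ≤ t₁) (h12 : t₁ < t₂) (ht₂ : t₂ ≤ T)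
    (hp2 : ‖p t₂‖ ≤ Lstar + (astar + η) * t₂) (hq2 : ‖q t₂‖ ≤ Lstar) :
    (∀ t ∈ Icc (0:ℝ) t₂, ‖q t‖ ≤ Lstar) ∧
      ‖p t₁‖ ≤ Lstar + (astar + η) * t₁ ∧ ‖q t₁‖ ≤ Lstar := by
  have hqc : ContinuousOn (fun t => ‖q t‖) (Icc 0 T) := fun t ht =>
    (htraj.hq t ht).continuousWithinAt.norm
  have hp0 : ‖p 0‖ ≤ Lstar := by
    refine le_of_sq_le_sq ?_ hLstar.le
    nlinarith [sq_nonneg ‖q 0‖]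
  have hq0 : ‖q 0‖ ≤ Lstar := by
    refine le_of_sq_le_sq ?_ hLstar.le
    nlinarith [sq_nonneg ‖p 0‖]
  have hcont : ∀ t ∈ Icc (0 : ℝ) t₂, ‖q t‖ ≤ Lstar := by
    intro t ht
    by_contra! hlt
    obtain ⟨s₀, hs₀, h0, hafter⟩ := exists_last_hit ht.1
      (hqc.mono (Icc_subset_Icc_right (ht.2.trans ht₂))) hq0 hlt
    obtain ⟨s₁, hs₁, h1, hbefore⟩ := exists_first_hit ht.2
      (hqc.mono (Icc_subset_Icc ht.1 ht₂)) hlt hq2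
    refine no_excursion hT hΨB hu hu' htraj hLstar hring hs₀.1 (hs₀.2.trans hs₁.1)
      (hs₁.2.trans ht₂) h0 h1 fun τ hτ => ?_
    rcases le_total τ t with h | h
    · exact hafter τ ⟨hτ.1, h⟩
    · exact hbefore τ ⟨h, hτ.2⟩
  refine ⟨hcont, ?_, hcont t₁ ⟨ht₁, h12.le⟩⟩
  have hforce : ‖∫ s in (0:ℝ)..t₁, (-gradient Φ (q s) - gradient (Ψ s) (q s))‖
      ≤ astar * |t₁ - 0| := by
    refine intervalIntegral.norm_integral_le_of_norm_le_const fun s hs => ?_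
    rw [uIoc_of_le ht₁] at hs
    have hs2 : s ≤ t₂ := hs.2.trans h12.le
    have h1 := hastar (q s) (hcont s ⟨hs.1.le, hs2⟩)
    have h2 := hΨB s ⟨hs.1.le, hs2.trans ht₂⟩ (q s)
    have h3 := norm_sub_le (-gradient Φ (q s)) (gradient (Ψ s) (q s))
    rw [norm_neg] at h3
    linarith
  rw [sub_zero, abs_of_nonneg ht₁] at hforce
  rw [htraj.hp t₁ ⟨ht₁, h12.le.trans ht₂⟩]
  have h1 := norm_add_le (p 0) (∫ s in (0:ℝ)..t₁, (-gradient Φ (q s) - gradient (Ψ s) (q s)))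
  have h2 : 0 ≤ η * t₁ := mul_nonneg hη.le ht₁
  linarith
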